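/- Fix k ∈ ℝ and let μ be a T-ergodic Borel probability measure on Ω with full support (supp μ = Ω). Then for every δ > 0 there exists a T-periodic point p ∈ Ω such that |L(A^{(k)}, p) − L(A^{(k)}, μ)| < δ, where L(A^{(k)}, p) = lim_{n→∞} (1/n)·log‖A_n(p)‖. -/

import Mathlib

open Real MeasureTheory Filter Topology Matrix Set

noncomputable section

/-- The left shift on bi-infinite sequences: `(Tω)_n = ω_{n+1}`. -/
def shift (ω : ℤ → ℕ) : ℤ → ℕ := fun n => ω (n + 1)

/-- The subshift of finite type: sequences with letters in `{1,…,ℓ}` and all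
transitions `(ω_n, ω_{n+1})` in the allowed set `W`. -/
def SFT (ℓ : ℕ) (W : Set (ℕ × ℕ)) : Set (ℤ → ℕ) :=
  {ω | (∀ n, 1 ≤ ω n ∧ ω n ≤ ℓ) ∧ ∀ n, (ω n, ω (n + 1)) ∈ W}

/-- The cocycle matrix
`A^{(k)}(ω) = √(ω₀/ω₋₁)·[[((ω₀+ω₋₁)/ω₀)·cos k, −ω₋₁/ω₀],[1, 0]]`. -/
def Acoc (k : ℝ) (ω : ℤ → ℕ) : Matrix (Fin 2) (Fin 2) ℝ :=
  Real.sqrt ((ω 0 : ℝ) / (ω (-1) : ℝ)) •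
    !![((ω 0 : ℝ) + (ω (-1) : ℝ)) / (ω 0 : ℝ) * Real.cos k, -((ω (-1) : ℝ) / (ω 0 : ℝ));
       (1 : ℝ), 0]

/-- The iterated cocycle `A_n(ω) = A^{(k)}(T^{n−1}ω)⋯A^{(k)}(ω)` for `n ≥ 0`,
with `A_0(ω) = Id`. -/
def AIter (k : ℝ) (ω : ℤ → ℕ) : ℕ → Matrix (Fin 2) (Fin 2) ℝ
  | 0 => 1
  | n + 1 => Acoc k (shift^[n] ω) * AIter k ω n

end

/-- We endow 2×2 real matrices with the `L²` operator norm. -/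
noncomputable instance : NormedAddCommGroup (Matrix (Fin 2) (Fin 2) ℝ) :=
  Matrix.instL2OpNormedAddCommGroup

/-- Projection onto nonnegative coordinates: `π₊ω = (ω_n)_{n≥0}`. -/
def projPlus (ω : ℤ → ℕ) : ℕ → ℕ := fun n => ω (n : ℤ)

/-- Projection onto nonpositive coordinates: `π₋ω = (ω_{−n})_{n≥0}`. -/
def projMinus (ω : ℤ → ℕ) : ℕ → ℕ := fun n => ω (-(n : ℤ))

/-- The map `P(ω) = (π₋ω, π₊ω)`; on each cylinder `[0;j]` this is the map `P_j`. -/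
def pairProj (ω : ℤ → ℕ) : (ℕ → ℕ) × (ℕ → ℕ) := (projMinus ω, projPlus ω)

/-- `μ` has a local product structure: there is a positive function `ψ` on `Ω`
(written as `ψ ∘ P` for a function on `Ω₋ × Ω₊`) such that for each letter `j`,
`ψ∘P_j⁻¹` is integrable with respect to `μ_j^− × μ_j^+` and
`(P_j)_* μ_j = (ψ∘P_j⁻¹) d(μ_j^− × μ_j^+)`. -/
def LocalProductStructure (ℓ : ℕ) (W : Set (ℕ × ℕ)) (μ : Measure (ℤ → ℕ)) : Prop :=
  ∃ ψ : (ℕ → ℕ) × (ℕ → ℕ) → ℝ,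
    (∀ ω ∈ SFT ℓ W, 0 < ψ (pairProj ω)) ∧
    ∀ j : ℕ, 1 ≤ j → j ≤ ℓ →
      MeasureTheory.Integrable ψ
        (((Measure.map projMinus μ).restrict {a | a 0 = j}).prod
          ((Measure.map projPlus μ).restrict {a | a 0 = j})) ∧
      Measure.map pairProj (μ.restrict {ω | ω 0 = j}) =
        (((Measure.map projMinus μ).restrict {a | a 0 = j}).prod
          ((Measure.map projPlus μ).restrict {a | a 0 = j})).withDensity
          (fun x => ENNReal.ofReal (ψ x))

/-- `supp μ = Ω`: every open set meeting `Ω` has positive measure. -/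
def FullSupport (ℓ : ℕ) (W : Set (ℕ × ℕ)) (μ : Measure (ℤ → ℕ)) : Prop :=
  ∀ U : Set (ℤ → ℕ), IsOpen U → (U ∩ SFT ℓ W).Nonempty → 0 < μ U

/-!
The functions `log ‖A_n‖` are subadditive, so by the `L¹` subadditive ergodic theorem
`log ‖A_n‖ / n` converges to `L` in `L¹`. Hence for large `q` some `ω ∈ Ω` has growth close to the
expected one on every block of its orbit that starts and ends at one of the times
`0, q, 2q, …, 2ℓq`. By the pigeonhole principle the same letter stands just before three of these
times, which gives two adjacent loops and their concatenation. Two elements of `SL(2,ℝ)` of large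
norm, both with small trace and with a product of small trace, have a product of norm much smaller
than the product of their norms. So if `L > 0`, one of the three loops has a trace of nearly
maximal size, and repeating that loop yields a periodic point whose exponent is nearly `L`. If `L`
is close to `0`, any of the loops will do.
-/

section MatrixNorm

open scoped Matrix.Norms.L2Operator

theorem norm_entry_le_l2_opNorm {m n 𝕜 : Type*} [Fintype m] [Fintype n] [DecidableEq n] [RCLike 𝕜]
    (A : Matrix m n 𝕜) (i : m) (j : n) : ‖A i j‖ ≤ ‖A‖ := by
  have h := (PiLp.norm_apply_le _ i).trans (A.l2_opNorm_mulVec (EuclideanSpace.single j 1))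
  simpa using h

theorem sq_l2_opNorm_le_sum_sq {m n 𝕜 : Type*} [Fintype m] [Fintype n] [DecidableEq n] [RCLike 𝕜]
    (A : Matrix m n 𝕜) : ‖A‖ ^ 2 ≤ ∑ i, ∑ j, ‖A i j‖ ^ 2 := by
  have hS : 0 ≤ ∑ i, ∑ j, ‖A i j‖ ^ 2 := by positivity
  suffices h : ‖A‖ ≤ √(∑ i, ∑ j, ‖A i j‖ ^ 2) from (Real.le_sqrt (norm_nonneg _) hS).1 h
  refine ContinuousLinearMap.opNorm_le_bound _ (Real.sqrt_nonneg _) fun v => ?_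
  refine le_of_sq_le_sq ?_ (by positivity)
  rw [mul_pow, Real.sq_sqrt hS, EuclideanSpace.norm_sq_eq, EuclideanSpace.norm_sq_eq,
    Finset.sum_mul]
  gcongr with i
  calc ‖∑ j, A i j * v j‖ ^ 2
      ≤ (∑ j, ‖A i j‖ * ‖v j‖) ^ 2 := by
        gcongr
        exact norm_sum_le_of_le _ fun j _ => (norm_mul _ _).le
    _ ≤ (∑ j, ‖A i j‖ ^ 2) * ∑ j, ‖v j‖ ^ 2 := Finset.sum_mul_sq_le_sq_mul_sq _ _ _

variable {X Y P : Matrix (Fin 2) (Fin 2) ℝ}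

theorem l2_opNorm_adjugate_fin_two (X : Matrix (Fin 2) (Fin 2) ℝ) : ‖X.adjugate‖ = ‖X‖ := by
  let J : Matrix (Fin 2) (Fin 2) ℝ := !![0, 1; -1, 0]
  have hJ : J ∈ unitary (Matrix (Fin 2) (Fin 2) ℝ) := by
    constructor <;> ext i j <;> fin_cases i <;> fin_cases j <;>
      simp [J, star_eq_conjTranspose, Matrix.mul_apply, Fin.sum_univ_two]
  have hadj : X.adjugate = J * Xᴴ * star J := by
    ext i j
    fin_cases i <;> fin_cases j <;>
      simp [J, star_eq_conjTranspose, Matrix.adjugate_fin_two, Matrix.mul_apply, vecMul, dotProduct]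
  rw [hadj, CStarRing.norm_mul_mem_unitary _ (Unitary.star_mem hJ),
    CStarRing.norm_mem_unitary_mul _ hJ, l2_opNorm_conjTranspose]

theorem one_le_l2_opNorm_of_det_eq_one (hX : X.det = 1) : 1 ≤ ‖X‖ := by
  have h : 1 ≤ ‖X‖ * ‖X‖ := by
    calc (1 : ℝ) = ‖X.adjugate * X‖ := by rw [adjugate_mul, hX, one_smul, CStarRing.norm_one]
      _ ≤ ‖X‖ * ‖X‖ := (norm_mul_le _ _).trans_eq (by rw [l2_opNorm_adjugate_fin_two])
  nlinarith [norm_nonneg X]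

theorem log_l2_opNorm_mul_le (hX : X.det = 1) (hY : Y.det = 1) :
    Real.log ‖X * Y‖ ≤ Real.log ‖X‖ + Real.log ‖Y‖ := by
  have hX1 := one_le_l2_opNorm_of_det_eq_one hX
  have hY1 := one_le_l2_opNorm_of_det_eq_one hY
  have hXY := one_le_l2_opNorm_of_det_eq_one (X := X * Y) (by simp [hX, hY])
  rw [← Real.log_mul (by positivity) (by positivity)]
  exact Real.log_le_log (by positivity) (norm_mul_le X Y)

theorem log_l2_opNorm_left_le (hX : X.det = 1) (hY : Y.det = 1) :
    Real.log ‖X‖ ≤ Real.log ‖X * Y‖ + Real.log ‖Y‖ := by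
  have h := log_l2_opNorm_mul_le (X := X * Y) (Y := Y.adjugate) (by simp [hX, hY])
    (by simp [det_adjugate, hY])
  rwa [Matrix.mul_assoc, mul_adjugate, hY, one_smul, Matrix.mul_one,
    l2_opNorm_adjugate_fin_two] at h

theorem exists_mem_spectrum_abs_trace_le (hP : 4 * P.det ≤ P.trace ^ 2) :
    ∃ e ∈ spectrum ℝ P, |P.trace| ≤ 2 * |e| := by
  have hroot (e : ℝ) : e ∈ spectrum ℝ P ↔ e ^ 2 - P.trace * e + P.det = 0 := by
    rw [mem_spectrum_iff_isRoot_charpoly, charpoly_fin_two]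
    simp
  obtain ⟨e, he⟩ : ∃ e, 1 * (e * e) + -P.trace * e + P.det = 0 := by
    refine exists_quadratic_eq_zero one_ne_zero ⟨√(discrim 1 (-P.trace) P.det), ?_⟩
    rw [Real.mul_self_sqrt]
    rw [discrim]
    linarith
  -- The roots of the characteristic polynomial are `e` and `P.trace - e`.
  have htri : |P.trace| ≤ |e| + |P.trace - e| := by simpa using abs_add_le e (P.trace - e)
  rcases le_total |P.trace - e| |e| with h | h
  · exact ⟨e, (hroot e).2 (by linear_combination he), by linarith⟩
  · exact ⟨P.trace - e, (hroot _).2 (by linear_combination he), by linarith⟩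

theorem abs_trace_div_two_pow_le_l2_opNorm_pow (hP : P.det = 1) (n : ℕ) :
    (|P.trace| / 2) ^ n ≤ ‖P ^ n‖ := by
  rcases le_or_gt (4 * P.det) (P.trace ^ 2) with h | h
  · obtain ⟨e, he, hle⟩ := exists_mem_spectrum_abs_trace_le h
    calc (|P.trace| / 2) ^ n ≤ |e| ^ n := by gcongr; linarith
      _ = ‖e ^ n‖ := by rw [norm_pow, Real.norm_eq_abs]
      _ ≤ ‖P ^ n‖ := spectrum.norm_le_norm_of_mem (spectrum.pow_mem_pow P n he)
  · have htr : |P.trace| ≤ 2 := abs_le_of_sq_le_sq (by linarith) zero_le_two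
    calc (|P.trace| / 2) ^ n ≤ 1 := pow_le_one₀ (by positivity) (by linarith)
      _ ≤ ‖P ^ n‖ := one_le_l2_opNorm_of_det_eq_one (by rw [det_pow, hP, one_pow])

theorem mul_log_abs_trace_div_two_le_log_l2_opNorm_pow (hP : P.det = 1) (n : ℕ) :
    n * Real.log (|P.trace| / 2) ≤ Real.log ‖P ^ n‖ := by
  rcases (abs_nonneg P.trace).eq_or_lt with htr | htr
  · rw [← htr, zero_div, Real.log_zero, mul_zero]
    exact Real.log_nonneg (one_le_l2_opNorm_of_det_eq_one (by rw [det_pow, hP, one_pow]))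
  · rw [← Real.log_pow]
    exact Real.log_le_log (by positivity) (abs_trace_div_two_pow_le_l2_opNorm_pow hP n)

/-- The entry `M₀₁ - M₁₀` of the skew-symmetric part of a `2 × 2` matrix. Up to sign it is the trace
of `M` times the rotation by `π / 2`, so that it enters trace identities on a par with
the trace. -/
def skewEntry {R : Type*} [Sub R] (M : Matrix (Fin 2) (Fin 2) R) : R := M 0 1 - M 1 0

theorem skewEntry_mul_add_skewEntry_mul {R : Type*} [CommRing R] (X Y : Matrix (Fin 2) (Fin 2) R) :
    skewEntry (X * Y) + skewEntry (Y * X) = X.trace * skewEntry Y + Y.trace * skewEntry X := by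
  simp only [skewEntry, Matrix.mul_apply, Fin.sum_univ_two, trace_fin_two]
  ring

theorem skewEntry_mul_mul_skewEntry_mul {R : Type*} [CommRing R] (X Y : Matrix (Fin 2) (Fin 2) R) :
    skewEntry (X * Y) * skewEntry (Y * X) =
      (X.trace ^ 2 + skewEntry X ^ 2) * Y.det + (Y.trace ^ 2 + skewEntry Y ^ 2) * X.det
        + (X * Y).trace ^ 2 - X.trace * Y.trace * (X * Y).trace
        + skewEntry X * skewEntry Y * (X * Y).trace - 4 * X.det * Y.det := by
  simp only [skewEntry, Matrix.mul_apply, Fin.sum_univ_two, trace_fin_two, det_fin_two]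
  ring

theorem sq_l2_opNorm_le_trace_sq_add_skewEntry_sq (hX : X.det = 1) :
    ‖X‖ ^ 2 ≤ X.trace ^ 2 + skewEntry X ^ 2 := by
  refine (sq_l2_opNorm_le_sum_sq X).trans ?_
  rw [det_fin_two] at hX
  simp only [Fin.sum_univ_two, Real.norm_eq_abs, sq_abs, trace_fin_two, skewEntry]
  linarith

theorem abs_skewEntry_le (X : Matrix (Fin 2) (Fin 2) ℝ) : |skewEntry X| ≤ 2 * ‖X‖ := by
  have h₀₁ := norm_entry_le_l2_opNorm X 0 1
  have h₁₀ := norm_entry_le_l2_opNorm X 1 0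
  rw [Real.norm_eq_abs] at h₀₁ h₁₀
  exact (abs_sub _ _).trans (by linarith)

-- The two identities for `skewEntry` make `skewEntry (X * Y)` a root of a monic quadratic
-- polynomial; only the terms that are small together with the traces are kept.
theorem sq_skewEntry_mul_le (hX : X.det = 1) (hY : Y.det = 1) :
    skewEntry (X * Y) ^ 2 ≤
      skewEntry (X * Y) * (X.trace * skewEntry Y + Y.trace * skewEntry X)
        + X.trace * Y.trace * (X * Y).trace - skewEntry X * skewEntry Y * (X * Y).trace + 4 := by
  have hprod := skewEntry_mul_mul_skewEntry_mul X Y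
  rw [hX, hY] at hprod
  rw [← skewEntry_mul_add_skewEntry_mul, mul_add, hprod]
  nlinarith

theorem sq_l2_opNorm_mul_le_of_abs_trace_le {a b θ : ℝ} (hX : X.det = 1) (hY : Y.det = 1)
    (hXa : ‖X‖ ≤ a) (hYb : ‖Y‖ ≤ b) (hθ : θ ≤ 1) (ha : 1 ≤ θ * a ^ 2)
    (htrX : |X.trace| ≤ θ * a) (htrY : |Y.trace| ≤ θ * b) (htrXY : |(X * Y).trace| ≤ θ * (a * b)) :
    ‖X * Y‖ ^ 2 ≤ 18 * θ * (a * b) ^ 2 := by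
  have ha₁ : 1 ≤ a := (one_le_l2_opNorm_of_det_eq_one hX).trans hXa
  have hb₁ : 1 ≤ b := (one_le_l2_opNorm_of_det_eq_one hY).trans hYb
  have hθ₀ : 0 < θ := pos_of_mul_pos_left (one_pos.trans_le ha) (by positivity)
  have hXY : ‖X * Y‖ ≤ a * b := (norm_mul_le X Y).trans (by gcongr)
  have hsX : |skewEntry X| ≤ 2 * a := (abs_skewEntry_le X).trans (by linarith)
  have hsY : |skewEntry Y| ≤ 2 * b := (abs_skewEntry_le Y).trans (by linarith)
  have hsXY : |skewEntry (X * Y)| ≤ 2 * (a * b) := (abs_skewEntry_le _).trans (by linarith)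
  have hlin : |skewEntry (X * Y) * (X.trace * skewEntry Y + Y.trace * skewEntry X)|
      ≤ 2 * (a * b) * (θ * a * (2 * b) + θ * b * (2 * a)) := by
    rw [abs_mul]
    gcongr
    refine (abs_add_le _ _).trans ?_
    rw [abs_mul, abs_mul]
    gcongr
  have htriple : |X.trace * Y.trace * (X * Y).trace| ≤ θ * a * (1 * b) * (1 * (a * b)) := by
    rw [abs_mul, abs_mul]
    gcongr
    · exact htrY.trans (by gcongr)
    · exact htrXY.trans (by gcongr)
  have hskew : |skewEntry X * skewEntry Y * (X * Y).trace| ≤ 2 * a * (2 * b) * (θ * (a * b)) := by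
    rw [abs_mul, abs_mul]
    gcongr
  have htrace : (X * Y).trace ^ 2 ≤ θ * (a * b) ^ 2 := by
    calc (X * Y).trace ^ 2 = |(X * Y).trace| ^ 2 := (sq_abs _).symm
      _ ≤ (θ * (a * b)) ^ 2 := by gcongr
      _ = θ * (θ * (a * b) ^ 2) := by ring
      _ ≤ θ * (1 * (a * b) ^ 2) := by gcongr
      _ = θ * (a * b) ^ 2 := by ring
  have hconst : 1 ≤ θ * (a * b) ^ 2 := by
    calc (1 : ℝ) ≤ θ * a ^ 2 := ha
      _ ≤ θ * (a * b) ^ 2 := by gcongr; nlinarith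
  have hnorm := sq_l2_opNorm_le_trace_sq_add_skewEntry_sq (X := X * Y) (by simp [hX, hY])
  linarith [sq_skewEntry_mul_le hX hY, le_of_abs_le hlin, le_of_abs_le htriple,
    neg_le_of_abs_le hskew]

theorem eighteen_lt_exp_three : (18 : ℝ) < Real.exp 3 := by
  calc (18 : ℝ) < 2.7 ^ 3 := by norm_num
    _ ≤ Real.exp 1 ^ 3 := by gcongr; linarith [Real.exp_one_gt_d9]
    _ = Real.exp 3 := by rw [← Real.exp_nat_mul]; norm_num

theorem le_log_abs_trace_of_le_log_l2_opNorm_mul {x y e : ℝ} (hX : X.det = 1) (hY : Y.det = 1)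
    (he : 1 ≤ e) (hex : 4 * e ≤ x) (hXx : Real.log ‖X‖ ≤ x + e) (hYy : Real.log ‖Y‖ ≤ y + e)
    (hXY : x + y - e ≤ Real.log ‖X * Y‖) :
    x - 8 * e ≤ Real.log |X.trace| ∨ y - 8 * e ≤ Real.log |Y.trace| ∨
      x + y - 8 * e ≤ Real.log |(X * Y).trace| := by
  have le_exp {s t u : ℝ} (h : Real.log s ≤ t) (htu : t ≤ u) : s ≤ Real.exp u :=
    (Real.le_exp_log s).trans (Real.exp_le_exp.2 (h.trans htu))
  by_contra! h
  obtain ⟨hx, hy, hxy⟩ := h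
  have hupper : ‖X * Y‖ ^ 2
      ≤ 18 * Real.exp (-9 * e) * (Real.exp (x + e) * Real.exp (y + e)) ^ 2 := by
    apply sq_l2_opNorm_mul_le_of_abs_trace_le hX hY (le_exp hXx le_rfl) (le_exp hYy le_rfl)
    · exact Real.exp_le_one_iff.2 (by linarith)
    · rw [← Real.exp_nat_mul, ← Real.exp_add, Nat.cast_ofNat]
      exact Real.one_le_exp (by linarith)
    · rw [← Real.exp_add]
      exact le_exp hx.le (by linarith)
    · rw [← Real.exp_add]
      exact le_exp hy.le (by linarith)
    · rw [← Real.exp_add, ← Real.exp_add]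
      exact le_exp hxy.le (by linarith)
  have hlower : Real.exp (2 * (x + y - e)) ≤ ‖X * Y‖ ^ 2 := by
    have hpos : 0 < ‖X * Y‖ :=
      one_pos.trans_le (one_le_l2_opNorm_of_det_eq_one (by simp [hX, hY]))
    rw [← Nat.cast_ofNat, Real.exp_nat_mul]
    gcongr
    exact (Real.le_log_iff_exp_le hpos).1 hXY
  refine lt_irrefl (Real.exp (2 * (x + y - e))) ?_
  calc Real.exp (2 * (x + y - e))
      ≤ 18 * Real.exp (-9 * e) * (Real.exp (x + e) * Real.exp (y + e)) ^ 2 :=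
        hlower.trans hupper
    _ < Real.exp 3 * Real.exp (-9 * e) * (Real.exp (x + e) * Real.exp (y + e)) ^ 2 := by
      gcongr
      exact eighteen_lt_exp_three
    _ = Real.exp (3 - 9 * e + 2 * (x + e + (y + e))) := by
      rw [← Real.exp_add, ← Real.exp_add, ← Real.exp_nat_mul, ← Real.exp_add]
      ring_nf
    _ ≤ Real.exp (2 * (x + y - e)) := Real.exp_le_exp.2 (by linarith)

end MatrixNorm

section MeanErgodic

variable {α E : Type*} [MeasurableSpace α] [NormedAddCommGroup E] {μ : Measure α} {T : α → α}

theorem integral_norm_le_norm_Lp {p : ENNReal} [Fact (1 ≤ p)] [IsProbabilityMeasure μ]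
    (f : Lp E p μ) : ∫ x, ‖f x‖ ∂μ ≤ ‖f‖ := by
  have hf := Lp.memLp f
  rw [integral_norm_eq_lintegral_enorm hf.aestronglyMeasurable, ← eLpNorm_one_eq_lintegral_enorm,
    Lp.norm_def]
  exact ENNReal.toReal_mono hf.eLpNorm_ne_top
    (eLpNorm_le_eLpNorm_of_exponent_le Fact.out hf.aestronglyMeasurable)

theorem coeFn_birkhoffSum_compMeasurePreserving {p : ENNReal} (hT : MeasurePreserving T μ μ)
    {f : α → E} (hf : MemLp f p μ) (n : ℕ) :
    (birkhoffSum (Lp.compMeasurePreserving T hT) _root_.id n (hf.toLp f) : Lp E p μ) =ᵐ[μ]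
      birkhoffSum T f n := by
  induction n with
  | zero => simpa only [birkhoffSum_zero, birkhoffSum_zero'] using Lp.coeFn_zero E p μ
  | succ n ih =>
    have hn : ((Lp.compMeasurePreserving T hT)^[n] (hf.toLp f) : Lp E p μ) =ᵐ[μ]
        f ∘ T^[n] := by
      rw [Lp.compMeasurePreserving_iterate]
      exact (Lp.coeFn_compMeasurePreserving _ (hT.iterate n)).trans
        ((hT.iterate n).quasiMeasurePreserving.ae_eq hf.coeFn_toLp)
    rw [birkhoffSum_succ]
    filter_upwards [Lp.coeFn_add (birkhoffSum (Lp.compMeasurePreserving T hT) _root_.id n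
      (hf.toLp f)) ((Lp.compMeasurePreserving T hT)^[n] (hf.toLp f)), ih, hn] with x hadd hx hxn
    rw [birkhoffSum_succ, ← hx, ← Function.comp_apply (f := f), ← hxn, ← Pi.add_apply, ← hadd]
    rfl

variable [NormedSpace ℝ E]

theorem integral_comp_iterate (hT : MeasurePreserving T μ μ) {f : α → E}
    (hf : AEStronglyMeasurable f μ) (n : ℕ) : ∫ x, f (T^[n] x) ∂μ = ∫ x, f x ∂μ := by
  have h := hT.iterate n
  rw [← integral_map h.measurable.aemeasurable (h.map_eq.symm ▸ hf), h.map_eq]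

theorem integrable_birkhoffAverage (hT : MeasurePreserving T μ μ) {f : α → E}
    (hf : Integrable f μ) (n : ℕ) : Integrable (birkhoffAverage ℝ T f n) μ :=
  (integrable_finsetSum _ fun i _ => (hT.iterate i).integrable_comp_of_integrable hf).smul _

theorem integral_birkhoffAverage (hT : MeasurePreserving T μ μ) {f : α → E}
    (hf : Integrable f μ) {n : ℕ} (hn : n ≠ 0) :
    ∫ x, birkhoffAverage ℝ T f n x ∂μ = ∫ x, f x ∂μ := by
  simp only [birkhoffAverage, birkhoffSum]
  have hint (i : ℕ) : Integrable (fun x => f (T^[i] x)) μ :=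
    (hT.iterate i).integrable_comp_of_integrable hf
  rw [integral_smul, integral_finsetSum _ fun i _ => hint i]
  simp only [integral_comp_iterate hT hf.aestronglyMeasurable, Finset.sum_const, Finset.card_range]
  rw [← Nat.cast_smul_eq_nsmul ℝ, inv_smul_smul₀ (by exact_mod_cast hn)]

variable [IsProbabilityMeasure μ]

theorem exists_tendsto_integral_abs_birkhoffAverage_sub (hT : Ergodic T μ) {f : α → ℝ}
    (hf : MemLp f 2 μ) :
    ∃ c, Tendsto (fun n : ℕ => ∫ x, |birkhoffAverage ℝ T f n x - c| ∂μ) atTop (𝓝 0) := by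
  have hmp := hT.toMeasurePreserving
  let U : Lp ℝ 2 μ →L[ℝ] Lp ℝ 2 μ := (Lp.compMeasurePreservingₗᵢ ℝ T hmp).toContinuousLinearMap
  obtain ⟨G, hG, hlim⟩ : ∃ G : Lp ℝ 2 μ, U G = G ∧
      Tendsto (birkhoffAverage ℝ U _root_.id · (hf.toLp f)) atTop (𝓝 G) :=
    ⟨_, LinearMap.mem_eqLocus.1 (Submodule.coe_mem _),
      U.tendsto_birkhoffAverage_orthogonalProjection
        (LinearIsometry.norm_toContinuousLinearMap_le _) (hf.toLp f)⟩
  obtain ⟨c, hc⟩ : ∃ c, G =ᵐ[μ] Function.const α c := by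
    refine hT.ae_eq_const_of_ae_eq_comp_ae (Lp.aestronglyMeasurable G) ?_
    have hGT : U G =ᵐ[μ] G ∘ T := Lp.coeFn_compMeasurePreserving G hmp
    rwa [hG, eventuallyEq_comm] at hGT
  refine ⟨c, squeeze_zero (fun n => integral_nonneg fun x => abs_nonneg _) (fun n => ?_)
    (tendsto_iff_norm_sub_tendsto_zero.1 hlim)⟩
  refine le_of_eq_of_le (integral_congr_ae ?_) (integral_norm_le_norm_Lp _)
  filter_upwards [coeFn_birkhoffSum_compMeasurePreserving hmp hf n,
    Lp.coeFn_smul ((n : ℝ)⁻¹) (birkhoffSum U _root_.id n (hf.toLp f)),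
    Lp.coeFn_sub (birkhoffAverage ℝ U _root_.id n (hf.toLp f)) G, hc] with x hsum hsmul hsub hGc
  rw [hsub, Pi.sub_apply, hGc, Real.norm_eq_abs, birkhoffAverage, ← hsum]
  exact congrArg (fun s => |s - c|) hsmul.symm

theorem tendsto_integral_abs_birkhoffAverage_sub_integral (hT : Ergodic T μ) {f : α → ℝ}
    (hf : MemLp f 2 μ) :
    Tendsto (fun n : ℕ => ∫ x, |birkhoffAverage ℝ T f n x - ∫ y, f y ∂μ| ∂μ) atTop (𝓝 0) := by
  obtain ⟨c, hc⟩ := exists_tendsto_integral_abs_birkhoffAverage_sub hT hf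
  have hfi : Integrable f μ := hf.integrable one_le_two
  suffices h : ∫ y, f y ∂μ = c by rwa [h]
  refine sub_eq_zero.1 (abs_nonpos_iff.1 (ge_of_tendsto hc ?_))
  filter_upwards [eventually_ne_atTop 0] with n hn
  calc |∫ y, f y ∂μ - c| = |∫ x, (birkhoffAverage ℝ T f n x - c) ∂μ| := by
        rw [integral_sub (integrable_birkhoffAverage hT.toMeasurePreserving hfi n)
          (integrable_const c), integral_birkhoffAverage hT.toMeasurePreserving hfi hn]
        simp
    _ ≤ ∫ x, |birkhoffAverage ℝ T f n x - c| ∂μ := abs_integral_le_integral_abs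

end MeanErgodic

section SubadditiveErgodic

variable {α : Type*} [MeasurableSpace α] {μ : Measure α} {T : α → α} {u : ℕ → α → ℝ}

theorem sum_range_le_of_le_add_shift {f g : ℕ → ℝ} {N n : ℕ}
    (h : ∀ i < n, f i ≤ g i + f (i + N)) :
    ∑ i ∈ Finset.range N, f i ≤
      ∑ i ∈ Finset.range n, g i + ∑ i ∈ Finset.range N, f (n + i) := by
  induction n with
  | zero => simp
  | succ n ih =>
    have hshift := Finset.sum_range_succ (fun i => f (n + i)) N
    rw [Finset.sum_range_succ'] at hshift
    simp only [add_zero, ← add_assoc] at hshift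
    simp only [Finset.sum_range_succ, add_right_comm n 1]
    linarith [ih fun i hi => h i (by lia), h n n.lt_succ_self]

theorem mul_le_sum_add_sum_of_subadditive {v : ℕ → ℕ → ℝ}
    (hv : ∀ i m n, v i (m + n) ≤ v i m + v (i + m) n) (N n : ℕ) :
    N * v 0 (n + N) ≤ ∑ i ∈ Finset.range n, v i N +
      ∑ i ∈ Finset.range N, (v 0 i + v (n + i) (N - i)) := by
  have hsplit : ∀ i ∈ Finset.range N, v 0 (n + N) ≤ v 0 i + v i (n + N - i) := fun i hi => by
    have hi := Finset.mem_range.1 hi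
    simpa [show i + (n + N - i) = n + N by lia] using hv 0 i (n + N - i)
  have htail : ∑ i ∈ Finset.range N, v i (n + N - i) ≤
      ∑ i ∈ Finset.range n, v i N + ∑ i ∈ Finset.range N, v (n + i) (n + N - (n + i)) := by
    refine sum_range_le_of_le_add_shift fun i hi => ?_
    simpa [show N + (n + N - (i + N)) = n + N - i by lia] using hv i N (n + N - (i + N))
  calc N * v 0 (n + N) = ∑ _i ∈ Finset.range N, v 0 (n + N) := by simp
    _ ≤ ∑ i ∈ Finset.range N, (v 0 i + v i (n + N - i)) := Finset.sum_le_sum hsplit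
    _ ≤ _ := by
      simp only [Finset.sum_add_distrib, Nat.add_sub_add_left] at htail ⊢
      linarith

-- A function bounded above by `D ≥ 0` satisfies `|y| ≤ 2 * D - y`, so that its `L¹` norm is
-- controlled by its integral.
theorem abs_div_sub_div_le {n N u S A I R : ℝ} (hn : 0 ≤ n) (hN : 1 ≤ N) (hR : 0 ≤ R)
    (hS : S = n * A) (h : N * u ≤ S + R) :
    |u / (n + N) - I / N| ≤
      2 * (|A - I| + (R + N * |I|) / (n + N)) - (u / (n + N) - I / N) := by
  have hN₀ : 0 < N := by linarith
  have hbound : u / (n + N) - I / N ≤ |A - I| + (R + N * |I|) / (n + N) := by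
    rw [div_sub_div _ _ (by positivity) hN₀.ne', div_le_iff₀ (by positivity)]
    calc u * N - (n + N) * I ≤ n * (A - I) + R - N * I := by linarith
      _ ≤ n * |A - I| + R + N * |I| := by
        nlinarith [mul_le_mul_of_nonneg_left (le_abs_self (A - I)) hn, neg_abs_le I]
      _ ≤ |A - I| * ((n + N) * N) + (R + N * |I|) * N := by
        have hnN : n ≤ (n + N) * N := by nlinarith
        have hRN : 0 ≤ R + N * |I| := by positivity
        nlinarith [mul_le_mul_of_nonneg_left hnN (abs_nonneg (A - I))]
      _ = (|A - I| + (R + N * |I|) / (n + N)) * ((n + N) * N) := by field_simp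
  rcases abs_cases (u / (n + N) - I / N) with ⟨heq, -⟩ | ⟨heq, -⟩ <;> rw [heq]
  · linarith
  · have : 0 ≤ |A - I| + (R + N * |I|) / (n + N) := by positivity
    linarith

theorem ae_abs_div_sub_div_le_of_subadditive (hT : MeasurePreserving T μ μ)
    (hsub : ∀ᵐ x ∂μ, ∀ m n, u (m + n) x ≤ u m x + u n (T^[m] x)) {N : ℕ} (hN : 1 ≤ N) (I : ℝ)
    (n : ℕ) : ∀ᵐ x ∂μ, |u (n + N) x / ((n + N : ℕ) : ℝ) - I / N| ≤
      2 * (|birkhoffAverage ℝ T (u N) n x - I| +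
        (∑ i ∈ Finset.range N, (|u i x| + |u (N - i) (T^[n + i] x)|) + N * |I|)
          / ((n + N : ℕ) : ℝ)) - (u (n + N) x / ((n + N : ℕ) : ℝ) - I / N) := by
  have horbit : ∀ᵐ x ∂μ, ∀ i m n, u (m + n) (T^[i] x) ≤ u m (T^[i] x) + u n (T^[i + m] x) := by
    refine ae_all_iff.2 fun i => ?_
    filter_upwards [(hT.iterate i).quasiMeasurePreserving.ae hsub] with x hx m n
    rw [add_comm i, Function.iterate_add_apply]
    exact hx m n
  filter_upwards [horbit] with x hx
  rw [Nat.cast_add]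
  refine abs_div_sub_div_le (S := birkhoffSum T (u N) n x) n.cast_nonneg (by exact_mod_cast hN)
    (by positivity) ?_ ?_
  · rcases n.eq_zero_or_pos with rfl | hn
    · simp
    · rw [birkhoffAverage, smul_eq_mul, mul_inv_cancel_left₀ (by positivity)]
  · calc N * u (n + N) x ≤ birkhoffSum T (u N) n x +
          ∑ i ∈ Finset.range N, (u i x + u (N - i) (T^[n + i] x)) :=
        mul_le_sum_add_sum_of_subadditive (v := fun i m => u m (T^[i] x)) hx N n
      _ ≤ _ := by gcongr <;> exact le_abs_self _

theorem integral_sum_abs_add_abs_comp_iterate (hT : MeasurePreserving T μ μ)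
    (hu : ∀ n, Integrable (u n) μ) (N n : ℕ) :
    ∫ x, ∑ i ∈ Finset.range N, (|u i x| + |u (N - i) (T^[n + i] x)|) ∂μ =
      ∑ i ∈ Finset.range N, (∫ x, |u i x| ∂μ + ∫ x, |u (N - i) x| ∂μ) := by
  have hcomp (i : ℕ) : Integrable (fun x => |u (N - i) (T^[n + i] x)|) μ :=
    (hT.iterate _).integrable_comp_of_integrable (hu _).abs
  have hterm (i : ℕ) : Integrable (fun x => |u i x| + |u (N - i) (T^[n + i] x)|) μ :=
    (hu i).abs.add (hcomp i)
  rw [integral_finsetSum _ fun i _ => hterm i]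
  refine Finset.sum_congr rfl fun i _ => ?_
  rw [integral_add (hu i).abs (hcomp i),
    integral_comp_iterate hT (f := fun x => |u (N - i) x|) (hu _).abs.aestronglyMeasurable]

theorem tendsto_integral_abs_sub_mul_div (hu₀ : u 0 = 0) {L : ℝ}
    (hL : Tendsto (fun n : ℕ => ∫ x, |u n x / n - L| ∂μ) atTop (𝓝 0)) (d : ℕ) :
    Tendsto (fun q : ℕ => (∫ x, |u (d * q) x - d * q * L| ∂μ) / q) atTop (𝓝 0) := by
  rcases d.eq_zero_or_pos with rfl | hd
  · simp [hu₀]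
  have h := (hL.comp (tendsto_id.const_mul_atTop' hd)).const_mul (d : ℝ)
  rw [mul_zero] at h
  refine h.congr' ?_
  filter_upwards [eventually_gt_atTop 0] with q hq
  rw [Function.comp_apply, id, eq_div_iff (by positivity), mul_right_comm, ← integral_const_mul]
  congr with x
  rw [← Nat.cast_mul, ← Nat.abs_cast (d * q), ← abs_mul, Nat.abs_cast, mul_sub,
    mul_div_cancel₀ _ (by positivity)]

variable [IsProbabilityMeasure μ]

theorem exists_integral_abs_div_sub_le_of_subadditive (hT : MeasurePreserving T μ μ)
    (hu : ∀ n, Integrable (u n) μ)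
    (hsub : ∀ᵐ x ∂μ, ∀ m n, u (m + n) x ≤ u m x + u n (T^[m] x)) {N : ℕ} (hN : 1 ≤ N) :
    ∃ K, ∀ n : ℕ, ∫ x, |u (n + N) x / ((n + N : ℕ) : ℝ) - (∫ y, u N y ∂μ) / N| ∂μ ≤
      2 * (∫ x, |birkhoffAverage ℝ T (u N) n x - ∫ y, u N y ∂μ| ∂μ + K / ((n + N : ℕ) : ℝ))
        - ((∫ x, u (n + N) x ∂μ) / ((n + N : ℕ) : ℝ) - (∫ y, u N y ∂μ) / N) := by
  set I := ∫ y, u N y ∂μ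
  refine ⟨∑ i ∈ Finset.range N, (∫ x, |u i x| ∂μ + ∫ x, |u (N - i) x| ∂μ) + N * |I|, fun n => ?_⟩
  set M : ℝ := ((n + N : ℕ) : ℝ)
  let R : α → ℝ := fun x => ∑ i ∈ Finset.range N, (|u i x| + |u (N - i) (T^[n + i] x)|)
  have hR : Integrable R μ := integrable_finsetSum _ fun i _ =>
    (hu i).abs.add ((hT.iterate _).integrable_comp_of_integrable (hu _).abs)
  have hRM : Integrable (fun x => (R x + N * |I|) / M) μ :=
    (hR.add (integrable_const _)).div_const _
  have hA : Integrable (fun x => |birkhoffAverage ℝ T (u N) n x - I|) μ :=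
    ((integrable_birkhoffAverage hT (hu N) n).sub (integrable_const I)).abs
  have hD : Integrable
      (fun x => 2 * (|birkhoffAverage ℝ T (u N) n x - I| + (R x + N * |I|) / M)) μ :=
    (hA.add hRM).const_mul 2
  have hy : Integrable (fun x => u (n + N) x / M - I / N) μ :=
    ((hu _).div_const _).sub (integrable_const _)
  calc ∫ x, |u (n + N) x / M - I / N| ∂μ
      ≤ ∫ x, (2 * (|birkhoffAverage ℝ T (u N) n x - I| + (R x + N * |I|) / M)
          - (u (n + N) x / M - I / N)) ∂μ :=
        integral_mono_ae hy.abs (hD.sub hy) (ae_abs_div_sub_div_le_of_subadditive hT hsub hN I n)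
    _ = _ := by
        rw [integral_sub hD hy, integral_const_mul, integral_add hA hRM, integral_div,
          integral_add hR (integrable_const _), integral_sum_abs_add_abs_comp_iterate hT hu,
          integral_sub ((hu _).div_const _) (integrable_const _), integral_div, integral_const,
          integral_const, probReal_univ, one_smul, one_smul]

theorem integral_abs_sub_le_add_abs_sub {f : α → ℝ} (hf : Integrable f μ) (a b : ℝ) :
    ∫ x, |f x - b| ∂μ ≤ ∫ x, |f x - a| ∂μ + |a - b| := by
  have hfa (c : ℝ) : Integrable (fun x => |f x - c|) μ := (hf.sub (integrable_const c)).abs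
  calc ∫ x, |f x - b| ∂μ ≤ ∫ x, (|f x - a| + |a - b|) ∂μ :=
        integral_mono (hfa b) ((hfa a).add (integrable_const _)) fun x => abs_sub_le _ _ _
    _ = ∫ x, |f x - a| ∂μ + |a - b| := by
        rw [integral_add (hfa a) (integrable_const _)]
        simp

theorem tendsto_integral_abs_div_sub_of_subadditive (hT : Ergodic T μ)
    (hu : ∀ n, MemLp (u n) 2 μ)
    (hsub : ∀ᵐ x ∂μ, ∀ m n, u (m + n) x ≤ u m x + u n (T^[m] x)) {L : ℝ}
    (hL : Tendsto (fun n : ℕ => (∫ x, u n x ∂μ) / n) atTop (𝓝 L)) :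
    Tendsto (fun n : ℕ => ∫ x, |u n x / n - L| ∂μ) atTop (𝓝 0) := by
  have hint (n : ℕ) : Integrable (u n) μ := (hu n).integrable one_le_two
  refine tendsto_order.2 ⟨fun b hb => Eventually.of_forall fun n =>
    hb.trans_le (integral_nonneg fun x => abs_nonneg _), fun ε hε => ?_⟩
  obtain ⟨N, hN, hNL⟩ : ∃ N : ℕ, 1 ≤ N ∧ |(∫ x, u N x ∂μ) / N - L| < ε / 2 :=
    ((eventually_ge_atTop 1).and
      (hL.eventually (Metric.ball_mem_nhds L (half_pos hε)))).exists
  set a := (∫ x, u N x ∂μ) / N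
  obtain ⟨K, hK⟩ :=
    exists_integral_abs_div_sub_le_of_subadditive hT.toMeasurePreserving hint hsub hN
  have hlim := (((tendsto_integral_abs_birkhoffAverage_sub_integral hT (hu N)).add
    ((tendsto_const_div_atTop_nhds_zero_nat K).comp (tendsto_add_atTop_nat N))).const_mul 2).sub
    ((hL.comp (tendsto_add_atTop_nat N)).sub_const a)
  have hlt : 2 * (0 + 0) - (L - a) < ε / 2 := by linarith [le_abs_self (a - L)]
  rw [← map_add_atTop_eq_nat N, eventually_map]
  filter_upwards [hlim.eventually (gt_mem_nhds hlt)] with n hn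
  calc ∫ x, |u (n + N) x / ((n + N : ℕ) : ℝ) - L| ∂μ
      ≤ ∫ x, |u (n + N) x / ((n + N : ℕ) : ℝ) - a| ∂μ + |a - L| :=
        integral_abs_sub_le_add_abs_sub ((hint _).div_const _) a L
    _ < ε / 2 + ε / 2 := add_lt_add ((hK n).trans_lt hn) hNL
    _ = ε := add_halves ε

theorem exists_mem_forall_le_sum_integral {ι : Type*} (J : Finset ι) {F : ι → α → ℝ}
    (hF : ∀ j, Integrable (F j) μ) (hF₀ : ∀ j x, 0 ≤ F j x) {s : Set α} (hs : μ sᶜ = 0) :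
    ∃ x ∈ s, ∀ j ∈ J, F j x ≤ ∑ j ∈ J, ∫ y, F j y ∂μ := by
  obtain ⟨x, hxs, hx⟩ :=
    exists_notMem_null_le_integral (integrable_finsetSum J fun j _ => hF j) hs
  rw [integral_finsetSum _ fun j _ => hF j] at hx
  exact ⟨x, notMem_compl_iff.1 hxs, fun j hj =>
    (Finset.single_le_sum (f := fun j => F j x) (fun j _ => hF₀ j x) hj).trans hx⟩

theorem eventually_exists_mem_forall_abs_sub_mul_le (hT : MeasurePreserving T μ μ)
    (hu : ∀ n, Integrable (u n) μ) (hu₀ : u 0 = 0) {L : ℝ}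
    (hL : Tendsto (fun n : ℕ => ∫ x, |u n x / n - L| ∂μ) atTop (𝓝 0)) {s : Set α}
    (hs : μ sᶜ = 0) (R : ℕ) {ε : ℝ} (hε : 0 < ε) :
    ∀ᶠ q : ℕ in atTop, ∃ x ∈ s, ∀ i ≤ R, ∀ d ≤ R,
      |u (d * q) (T^[i * q] x) - d * q * L| ≤ ε * q := by
  let D (q d : ℕ) (x : α) : ℝ := |u (d * q) x - d * q * L|
  have hD (q d : ℕ) : Integrable (D q d) μ := ((hu _).sub (integrable_const _)).abs
  let J := Finset.range (R + 1) ×ˢ Finset.range (R + 1)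
  have hlim : Tendsto (fun q : ℕ => ∑ j ∈ J, (∫ x, D q j.2 x ∂μ) / q) atTop (𝓝 0) := by
    simpa using tendsto_finsetSum J fun j _ => tendsto_integral_abs_sub_mul_div hu₀ hL j.2
  filter_upwards [hlim.eventually (gt_mem_nhds hε), eventually_gt_atTop 0] with q hq hq₀
  obtain ⟨x, hxs, hx⟩ := exists_mem_forall_le_sum_integral J
    (F := fun j x => D q j.2 (T^[j.1 * q] x))
    (fun j => (hT.iterate _).integrable_comp_of_integrable (hD _ _)) (fun j x => abs_nonneg _) hs
  refine ⟨x, hxs, fun i hi d hd => ?_⟩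
  calc D q d (T^[i * q] x)
      ≤ ∑ j ∈ J, ∫ y, D q j.2 (T^[j.1 * q] y) ∂μ :=
        hx (i, d) (Finset.mk_mem_product (Finset.mem_range_succ_iff.2 hi)
          (Finset.mem_range_succ_iff.2 hd))
    _ = (∑ j ∈ J, (∫ x, D q j.2 x ∂μ) / q) * q := by
        rw [← Finset.sum_div, div_mul_cancel₀ _ (by positivity)]
        exact Finset.sum_congr rfl fun j _ =>
          integral_comp_iterate hT (hD _ _).aestronglyMeasurable _
    _ ≤ ε * q := by gcongr

end SubadditiveErgodic

section Cocycle

/-- The iterates of the cocycle over the shift with values in a monoid whose generator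
`ω ↦ B (ω (-1)) (ω 0)` depends on two consecutive letters; new factors are multiplied on the
left. -/
def cocycleProd {M : Type*} [Monoid M] (B : ℕ → ℕ → M) (ω : ℤ → ℕ) : ℕ → M
  | 0 => 1
  | n + 1 => B (ω (n - 1)) (ω n) * cocycleProd B ω n

theorem shift_iterate_apply (n : ℕ) (ω : ℤ → ℕ) (j : ℤ) : shift^[n] ω j = ω (j + n) := by
  induction n generalizing ω with
  | zero => simp
  | succ n ih =>
    rw [Function.iterate_succ_apply, ih, shift, Nat.cast_succ, add_assoc]

theorem shift_iterate_mem_SFT {ℓ : ℕ} {W : Set (ℕ × ℕ)} {ω : ℤ → ℕ} (hω : ω ∈ SFT ℓ W) (n : ℕ) :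
    shift^[n] ω ∈ SFT ℓ W := by
  refine ⟨fun j => ?_, fun j => ?_⟩ <;> simp only [shift_iterate_apply]
  · exact hω.1 _
  · simpa only [add_right_comm] using hω.2 (j + n)

section Monoid

variable {M : Type*} [Monoid M] (B : ℕ → ℕ → M)

theorem cocycleProd_add (ω : ℤ → ℕ) (m n : ℕ) :
    cocycleProd B ω (m + n) = cocycleProd B (shift^[m] ω) n * cocycleProd B ω m := by
  induction n with
  | zero => simp [cocycleProd]
  | succ n ih =>
    rw [← add_assoc, cocycleProd, cocycleProd, ih, mul_assoc, shift_iterate_apply,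
      shift_iterate_apply]
    congr 3 <;> push_cast <;> ring

variable {B}

theorem cocycleProd_congr {ω ω' : ℤ → ℕ} {n : ℕ} (h : ∀ j : ℤ, -1 ≤ j → j < n → ω j = ω' j) :
    cocycleProd B ω n = cocycleProd B ω' n := by
  induction n with
  | zero => rfl
  | succ n ih =>
    rw [cocycleProd, cocycleProd, ih fun j hj hjn => h j hj (by lia), h _ (by lia) (by lia),
      h _ (by lia) (by lia)]

theorem cocycleProd_mul_of_isPeriodicPt {p : ℤ → ℕ} {m : ℕ}
    (hp : Function.IsPeriodicPt shift m p) (n : ℕ) :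
    cocycleProd B p (m * n) = cocycleProd B p m ^ n := by
  induction n with
  | zero => simp [cocycleProd]
  | succ n ih => rw [mul_add_one, add_comm, cocycleProd_add, hp.eq, ih, pow_succ]

theorem continuous_cocycleProd [TopologicalSpace M] [ContinuousMul M] (n : ℕ) :
    Continuous fun ω : ℤ → ℕ => cocycleProd B ω n := by
  induction n with
  | zero => exact continuous_const
  | succ n ih =>
    have hB : Continuous fun q : ℕ × ℕ => B q.1 q.2 := continuous_of_discreteTopology
    exact (hB.comp ((continuous_apply _).prodMk (continuous_apply _))).mul ih

end Monoid

open scoped Matrix.Norms.L2Operator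

/-- The generator of a two-letter cocycle of real `2 × 2` matrices has determinant `1` on the
subshift. -/
def IsUnimodularOn (ℓ : ℕ) (W : Set (ℕ × ℕ)) (B : ℕ → ℕ → Matrix (Fin 2) (Fin 2) ℝ) : Prop :=
  ∀ ω ∈ SFT ℓ W, (B (ω (-1)) (ω 0)).det = 1

/-- The logarithmic growth `log ‖A_n(ω)‖` of the cocycle generated by `B`. -/
noncomputable def logGrowth (B : ℕ → ℕ → Matrix (Fin 2) (Fin 2) ℝ) (n : ℕ) (ω : ℤ → ℕ) : ℝ :=
  Real.log ‖cocycleProd B ω n‖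

variable {ℓ : ℕ} {W : Set (ℕ × ℕ)} {B : ℕ → ℕ → Matrix (Fin 2) (Fin 2) ℝ} {ω : ℤ → ℕ}

theorem logGrowth_zero : logGrowth B 0 = 0 := by
  ext ω
  simp [logGrowth, cocycleProd]

theorem IsUnimodularOn.det_cocycleProd (hB : IsUnimodularOn ℓ W B) (hω : ω ∈ SFT ℓ W) (n : ℕ) :
    (cocycleProd B ω n).det = 1 := by
  induction n with
  | zero => simp [cocycleProd]
  | succ n ih =>
    have h := hB _ (shift_iterate_mem_SFT hω n)
    rw [shift_iterate_apply, shift_iterate_apply, zero_add, neg_add_eq_sub] at h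
    rw [cocycleProd, det_mul, h, ih, one_mul]

theorem IsUnimodularOn.logGrowth_nonneg (hB : IsUnimodularOn ℓ W B) (hω : ω ∈ SFT ℓ W) (n : ℕ) :
    0 ≤ logGrowth B n ω :=
  Real.log_nonneg (one_le_l2_opNorm_of_det_eq_one (hB.det_cocycleProd hω n))

theorem IsUnimodularOn.logGrowth_add_le (hB : IsUnimodularOn ℓ W B) (hω : ω ∈ SFT ℓ W)
    (m n : ℕ) : logGrowth B (m + n) ω ≤ logGrowth B m ω + logGrowth B n (shift^[m] ω) := by
  rw [add_comm (logGrowth B m ω), logGrowth, cocycleProd_add]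
  exact log_l2_opNorm_mul_le (hB.det_cocycleProd (shift_iterate_mem_SFT hω m) n)
    (hB.det_cocycleProd hω m)

theorem IsUnimodularOn.logGrowth_shift_iterate_le (hB : IsUnimodularOn ℓ W B) (hω : ω ∈ SFT ℓ W)
    (m n : ℕ) : logGrowth B n (shift^[m] ω) ≤ logGrowth B (m + n) ω + logGrowth B m ω := by
  rw [logGrowth, logGrowth, cocycleProd_add]
  exact log_l2_opNorm_left_le (hB.det_cocycleProd (shift_iterate_mem_SFT hω m) n)
    (hB.det_cocycleProd hω m)

theorem IsUnimodularOn.exists_logGrowth_le (hB : IsUnimodularOn ℓ W B) :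
    ∃ C, 0 ≤ C ∧ ∀ ω ∈ SFT ℓ W, ∀ n : ℕ, logGrowth B n ω ≤ n * C := by
  let letters := Finset.Icc 1 ℓ ×ˢ Finset.Icc 1 ℓ
  obtain ⟨C, hC⟩ := (letters.image fun q => Real.log ‖B q.1 q.2‖).exists_le
  refine ⟨max C 0, le_max_right _ _, fun ω hω n => ?_⟩
  induction n with
  | zero => simp [logGrowth_zero]
  | succ n ih =>
    have hstep : logGrowth B 1 (shift^[n] ω) ≤ max C 0 := by
      refine (hC _ (Finset.mem_image.2 ⟨(ω (n - 1), ω n), ?_, ?_⟩)).trans (le_max_left _ _)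
      · exact Finset.mk_mem_product (Finset.mem_Icc.2 (hω.1 _)) (Finset.mem_Icc.2 (hω.1 _))
      · simp [logGrowth, cocycleProd, shift_iterate_apply, neg_add_eq_sub]
    rw [Nat.cast_succ, add_one_mul]
    exact (hB.logGrowth_add_le hω n 1).trans (add_le_add ih hstep)

theorem measurable_logGrowth (n : ℕ) : Measurable (logGrowth B n) :=
  Real.measurable_log.comp (continuous_cocycleProd n).norm.measurable

theorem IsUnimodularOn.memLp_logGrowth (hB : IsUnimodularOn ℓ W B) {μ : Measure (ℤ → ℕ)}
    [IsFiniteMeasure μ] (hμ : μ (SFT ℓ W)ᶜ = 0) (p : ENNReal) (n : ℕ) :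
    MemLp (logGrowth B n) p μ := by
  obtain ⟨C, -, hC⟩ := hB.exists_logGrowth_le
  refine MemLp.of_bound (measurable_logGrowth n).aestronglyMeasurable (n * C) ?_
  have hSFT : ∀ᵐ ω ∂μ, ω ∈ SFT ℓ W := mem_ae_iff.2 hμ
  filter_upwards [hSFT] with ω hω
  rw [Real.norm_of_nonneg (hB.logGrowth_nonneg hω n)]
  exact hC ω hω n

end Cocycle

section PeriodicPoint

open scoped Matrix.Norms.L2Operator

/-- The periodic sequence repeating the letters `ω 0, …, ω (m - 1)`. -/
def periodize (ω : ℤ → ℕ) (m : ℕ) : ℤ → ℕ := fun j => ω (j % m)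

/-- The cocycle generated by `B` has Lyapunov exponent `L` at `ω`; the limit is required
to exist. -/
def HasLyapunovExponent (B : ℕ → ℕ → Matrix (Fin 2) (Fin 2) ℝ) (ω : ℤ → ℕ) (L : ℝ) : Prop :=
  Tendsto (fun n : ℕ => logGrowth B n ω / n) atTop (𝓝 L)

variable {ℓ m : ℕ} {W : Set (ℕ × ℕ)} {ω p : ℤ → ℕ} {L : ℝ}

theorem isPeriodicPt_periodize (ω : ℤ → ℕ) (m : ℕ) :
    Function.IsPeriodicPt shift m (periodize ω m) := by
  ext j
  simp [shift_iterate_apply, periodize]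

theorem periodize_mem_SFT (hω : ω ∈ SFT ℓ W) (hm : 0 < m) (hloop : ω (-1) = ω (m - 1)) :
    periodize ω m ∈ SFT ℓ W := by
  refine ⟨fun j => hω.1 _, fun j => ?_⟩
  have hj := Int.emod_nonneg j (by lia : (m : ℤ) ≠ 0)
  rcases (Int.add_one_le_iff.2 (Int.emod_lt_of_pos j (by lia : (0 : ℤ) < m))).eq_or_lt
    with hlast | hlt
  · have hnext : (j + 1) % m = 0 := by rw [← Int.emod_add_emod, hlast, Int.emod_self]
    have hjm : j % m = m - 1 := by lia
    simpa [periodize, hnext, hjm, ← hloop] using hω.2 (-1)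
  · have hnext : (j + 1) % m = j % m + 1 := by
      rw [← Int.emod_add_emod, Int.emod_eq_of_lt (by lia) hlt]
    simpa only [periodize, hnext] using hω.2 (j % m)

theorem cocycleProd_periodize {M : Type*} [Monoid M] {B : ℕ → ℕ → M} (hm : 0 < m)
    (hloop : ω (-1) = ω (m - 1)) : cocycleProd B (periodize ω m) m = cocycleProd B ω m := by
  refine cocycleProd_congr fun j hj hjm => ?_
  rcases hj.eq_or_lt with rfl | hj
  · have hmod : (-1 : ℤ) % m = m - 1 := by
      rw [← Int.add_emod_right, Int.emod_eq_of_lt (by lia) (by lia)]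
      ring
    rw [periodize, hmod, hloop]
  · rw [periodize, Int.emod_eq_of_lt (by lia) hjm]

variable {B : ℕ → ℕ → Matrix (Fin 2) (Fin 2) ℝ}

theorem IsUnimodularOn.exists_logGrowth_shift_iterate_le (hB : IsUnimodularOn ℓ W B)
    (hp : p ∈ SFT ℓ W) (hper : p ∈ Function.periodicPts shift) :
    ∃ K, 0 ≤ K ∧ ∀ n r : ℕ, logGrowth B n (shift^[r] p) ≤ logGrowth B n p + K := by
  obtain ⟨m, hm, hmp⟩ := hper
  obtain ⟨C, hC₀, hC⟩ := hB.exists_logGrowth_le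
  refine ⟨2 * (m * C), by positivity, fun n r => ?_⟩
  have hbound {σ : ℤ → ℕ} (hσ : σ ∈ SFT ℓ W) : logGrowth B (r % m) σ ≤ m * C := by
    refine (hC σ hσ _).trans ?_
    gcongr
    exact (Nat.mod_lt _ hm).le
  calc logGrowth B n (shift^[r] p) = logGrowth B n (shift^[r % m] p) := by
        rw [hmp.iterate_mod_apply]
    _ ≤ logGrowth B (n + r % m) p + logGrowth B (r % m) p := by
        rw [add_comm n]
        exact hB.logGrowth_shift_iterate_le hp _ n
    _ ≤ logGrowth B n p + logGrowth B (r % m) (shift^[n] p) + logGrowth B (r % m) p := by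
        gcongr
        exact hB.logGrowth_add_le hp n _
    _ ≤ logGrowth B n p + 2 * (m * C) := by
        linarith [hbound hp, hbound (shift_iterate_mem_SFT hp n)]

theorem IsUnimodularOn.exists_hasLyapunovExponent (hB : IsUnimodularOn ℓ W B)
    (hp : p ∈ SFT ℓ W) (hper : p ∈ Function.periodicPts shift) :
    ∃ L, HasLyapunovExponent B p L := by
  obtain ⟨K, hK₀, hK⟩ := hB.exists_logGrowth_shift_iterate_le hp hper
  have hsub : Subadditive fun n => logGrowth B n p + K := fun i j => by
    linarith [hB.logGrowth_add_le hp i j, hK j i]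
  have hbdd : BddBelow (range fun n : ℕ => (logGrowth B n p + K) / n) := by
    refine ⟨0, ?_⟩
    rintro _ ⟨n, rfl⟩
    have := hB.logGrowth_nonneg hp n
    positivity
  refine ⟨hsub.lim, ?_⟩
  simpa [HasLyapunovExponent, ← sub_div] using
    (hsub.tendsto_lim hbdd).sub (tendsto_const_div_atTop_nhds_zero_nat K)

theorem HasLyapunovExponent.nonneg (hL : HasLyapunovExponent B p L) (hB : IsUnimodularOn ℓ W B)
    (hp : p ∈ SFT ℓ W) : 0 ≤ L :=
  ge_of_tendsto' hL fun n => div_nonneg (hB.logGrowth_nonneg hp n) n.cast_nonneg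

theorem HasLyapunovExponent.tendsto_log_l2_opNorm_pow_div (hL : HasLyapunovExponent B p L)
    (hm : 0 < m) (hp : Function.IsPeriodicPt shift m p) :
    Tendsto (fun n : ℕ => Real.log ‖cocycleProd B p m ^ n‖ / n) atTop (𝓝 (m * L)) := by
  refine ((hL.comp (tendsto_id.const_mul_atTop' hm)).const_mul (m : ℝ)).congr fun n => ?_
  rw [Function.comp_apply, id, logGrowth, cocycleProd_mul_of_isPeriodicPt hp, Nat.cast_mul]
  field_simp

theorem HasLyapunovExponent.mul_le_logGrowth (hL : HasLyapunovExponent B p L)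
    (hB : IsUnimodularOn ℓ W B) (hpS : p ∈ SFT ℓ W) (hm : 0 < m)
    (hp : Function.IsPeriodicPt shift m p) : m * L ≤ logGrowth B m p := by
  refine le_of_tendsto (hL.tendsto_log_l2_opNorm_pow_div hm hp) ?_
  filter_upwards [eventually_gt_atTop 0] with n hn
  have hdet : (cocycleProd B p m ^ n).det = 1 := by rw [det_pow, hB.det_cocycleProd hpS, one_pow]
  rw [div_le_iff₀' (by positivity), logGrowth, ← Real.log_pow]
  exact Real.log_le_log (one_pos.trans_le (one_le_l2_opNorm_of_det_eq_one hdet)) (norm_pow_le _ n)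

theorem HasLyapunovExponent.log_abs_trace_div_two_le (hL : HasLyapunovExponent B p L)
    (hB : IsUnimodularOn ℓ W B) (hpS : p ∈ SFT ℓ W) (hm : 0 < m)
    (hp : Function.IsPeriodicPt shift m p) :
    Real.log (|(cocycleProd B p m).trace| / 2) ≤ m * L := by
  refine ge_of_tendsto (hL.tendsto_log_l2_opNorm_pow_div hm hp) ?_
  filter_upwards [eventually_gt_atTop 0] with n hn
  rw [le_div_iff₀' (by positivity)]
  exact mul_log_abs_trace_div_two_le_log_l2_opNorm_pow (hB.det_cocycleProd hpS m) n

theorem IsUnimodularOn.exists_periodic_of_loop (hB : IsUnimodularOn ℓ W B) (hω : ω ∈ SFT ℓ W)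
    (hm : 0 < m) (hloop : ω (-1) = ω (m - 1)) :
    ∃ p ∈ SFT ℓ W, p ∈ Function.periodicPts shift ∧ ∃ L, HasLyapunovExponent B p L ∧ 0 ≤ L ∧
      m * L ≤ logGrowth B m ω ∧ Real.log (|(cocycleProd B ω m).trace| / 2) ≤ m * L := by
  have hp := periodize_mem_SFT hω hm hloop
  have hper := isPeriodicPt_periodize ω m
  obtain ⟨L, hL⟩ := hB.exists_hasLyapunovExponent hp ⟨m, hm, hper⟩
  have hprod : cocycleProd B (periodize ω m) m = cocycleProd B ω m :=
    cocycleProd_periodize hm hloop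
  rw [logGrowth, ← hprod]
  exact ⟨periodize ω m, hp, ⟨m, hm, hper⟩, L, hL, hL.nonneg hB hp,
    hL.mul_le_logGrowth hB hp hm hper, hL.log_abs_trace_div_two_le hB hp hm hper⟩

end PeriodicPoint

section PeriodicApproximation

open scoped Matrix.Norms.L2Operator

theorem exists_three_eq {α : Type*} {s : Finset α} {f : ℕ → α} (hf : ∀ i, f i ∈ s) :
    ∃ i d e, 0 < d ∧ 0 < e ∧ i + d + e ≤ 2 * s.card ∧ f i = f (i + d) ∧
      f (i + d) = f (i + d + e) := by
  classical
  obtain ⟨a, -, ha⟩ := Finset.exists_lt_card_fiber_of_mul_lt_card_of_maps_to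
    (s := Finset.range (2 * s.card + 1)) (t := s) (n := 2) (fun i _ => hf i)
    (by rw [Finset.card_range]; lia)
  set fiber := (Finset.range (2 * s.card + 1)).filter fun i => f i = a
  let g : Fin 3 ↪o ℕ := fiber.orderEmbOfCardLe ha
  have hg (j : Fin 3) : g j < 2 * s.card + 1 ∧ f (g j) = a := by
    simpa [fiber] using fiber.orderEmbOfCardLe_mem ha j
  have h01 : g 0 < g 1 := g.strictMono (by decide)
  have h12 : g 1 < g 2 := g.strictMono (by decide)
  refine ⟨g 0, g 1 - g 0, g 2 - g 1, Nat.sub_pos_of_lt h01, Nat.sub_pos_of_lt h12, ?_⟩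
  rw [Nat.add_sub_of_le h01.le, Nat.add_sub_of_le h12.le, (hg 0).2, (hg 1).2, (hg 2).2]
  exact ⟨Nat.le_of_lt_succ (hg 2).1, rfl, rfl⟩

theorem log_sub_one_le_log_div_two (x : ℝ) : Real.log x - 1 ≤ Real.log (x / 2) := by
  rcases eq_or_ne x 0 with rfl | hx
  · simp
  · rw [Real.log_div hx two_ne_zero]
    linarith [Real.log_two_lt_d9]

variable {ℓ m n q : ℕ} {W : Set (ℕ × ℕ)} {B : ℕ → ℕ → Matrix (Fin 2) (Fin 2) ℝ} {ω : ℤ → ℕ}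
  {L ε : ℝ}

theorem IsUnimodularOn.exists_periodic_abs_sub_le (hB : IsUnimodularOn ℓ W B)
    (hω : ω ∈ SFT ℓ W) (hloop : ω (-1) = ω (m - 1)) (hqm : q ≤ m) (hεq : 1 ≤ ε * q)
    (hupper : logGrowth B m ω ≤ m * L + ε * q)
    (hlower : L ≤ 9 * ε ∨ m * L - 8 * (ε * q) ≤ Real.log |(cocycleProd B ω m).trace|) :
    ∃ p ∈ SFT ℓ W, p ∈ Function.periodicPts shift ∧
      ∃ Lp, HasLyapunovExponent B p Lp ∧ |Lp - L| ≤ 9 * ε := by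
  have hε : 0 < ε := pos_of_mul_pos_left (one_pos.trans_le hεq) q.cast_nonneg
  have hm : 0 < (m : ℝ) :=
    (pos_of_mul_pos_right (one_pos.trans_le hεq) hε.le).trans_le (Nat.cast_le.2 hqm)
  have hεm : ε * q ≤ ε * m := by gcongr
  obtain ⟨p, hp, hper, Lp, hLp, hLp₀, hLp_le, hle_Lp⟩ :=
    hB.exists_periodic_of_loop hω (Nat.cast_pos.1 hm) hloop
  refine ⟨p, hp, hper, Lp, hLp, abs_le.2 ⟨?_, ?_⟩⟩
  · rcases hlower with hL | htrace
    · linarith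
    · have hhalf := log_sub_one_le_log_div_two |(cocycleProd B ω m).trace|
      refine le_of_mul_le_mul_left (a := (m : ℝ)) ?_ hm
      linarith
  · refine le_of_mul_le_mul_left (a := (m : ℝ)) ?_ hm
    linarith

theorem IsUnimodularOn.exists_periodic_of_adjacent_loops (hB : IsUnimodularOn ℓ W B)
    (hω : ω ∈ SFT ℓ W) (hloop₁ : ω (-1) = ω (m - 1)) (hloop₂ : ω (m - 1) = ω (m + n - 1))
    (hqm : q ≤ m) (hqn : q ≤ n) (hεq : 1 ≤ ε * q)
    (hgrowth₁ : logGrowth B m ω ≤ m * L + ε * q)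
    (hgrowth₂ : logGrowth B n (shift^[m] ω) ≤ n * L + ε * q)
    (hgrowth : |logGrowth B (m + n) ω - (m + n) * L| ≤ ε * q) :
    ∃ p ∈ SFT ℓ W, p ∈ Function.periodicPts shift ∧
      ∃ Lp, HasLyapunovExponent B p Lp ∧ |Lp - L| ≤ 9 * ε := by
  rcases le_or_gt L (9 * ε) with hL | hL
  · exact hB.exists_periodic_abs_sub_le hω hloop₁ hqm hεq hgrowth₁ (.inl hL)
  have hσ := shift_iterate_mem_SFT hω m
  have hε : 0 < ε := pos_of_mul_pos_left (one_pos.trans_le hεq) q.cast_nonneg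
  have hnL : 4 * (ε * q) ≤ n * L :=
    calc 4 * (ε * q) = q * (4 * ε) := by ring
      _ ≤ n * L := by gcongr; linarith
  obtain ⟨hlower, hupper⟩ := abs_le.1 hgrowth
  have hmul : (n * L + m * L) - ε * q ≤
      Real.log ‖cocycleProd B (shift^[m] ω) n * cocycleProd B ω m‖ := by
    rw [← cocycleProd_add]
    rw [logGrowth] at hlower
    linarith
  rcases le_log_abs_trace_of_le_log_l2_opNorm_mul (hB.det_cocycleProd hσ n)
    (hB.det_cocycleProd hω m) hεq hnL hgrowth₂ hgrowth₁ hmul with htrace | htrace | htrace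
  · refine hB.exists_periodic_abs_sub_le hσ ?_ hqn hεq hgrowth₂ (.inr htrace)
    rw [shift_iterate_apply, shift_iterate_apply, neg_add_eq_sub, hloop₂, add_comm (m : ℤ),
      add_sub_right_comm]
  · exact hB.exists_periodic_abs_sub_le hω hloop₁ hqm hεq hgrowth₁ (.inr htrace)
  · rw [← cocycleProd_add] at htrace
    refine hB.exists_periodic_abs_sub_le (m := m + n) hω ?_ (Nat.le_add_right_of_le hqm) hεq ?_
      (.inr ?_)
    · rw [hloop₁, hloop₂, Nat.cast_add]
    · rw [Nat.cast_add]
      linarith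
    · rw [Nat.cast_add]
      linarith

theorem IsUnimodularOn.exists_periodic_of_blocks (hB : IsUnimodularOn ℓ W B)
    (hω : ω ∈ SFT ℓ W) (hεq : 1 ≤ ε * q)
    (hblock : ∀ i ≤ 2 * ℓ, ∀ d ≤ 2 * ℓ,
      |logGrowth B (d * q) (shift^[i * q] ω) - d * q * L| ≤ ε * q) :
    ∃ p ∈ SFT ℓ W, p ∈ Function.periodicPts shift ∧
      ∃ Lp, HasLyapunovExponent B p Lp ∧ |Lp - L| ≤ 9 * ε := by
  obtain ⟨i, d, e, hd, he, hide, hloop₁, hloop₂⟩ :=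
    exists_three_eq (s := Finset.Icc 1 ℓ) (f := fun i => ω (i * q - 1))
      fun i => Finset.mem_Icc.2 (hω.1 _)
  rw [Nat.card_Icc, Nat.add_sub_cancel] at hide
  have hgrowth (j : ℕ) (hj : j ≤ 2 * ℓ) (t : ℕ) (ht : t ≤ 2 * ℓ) :
      logGrowth B (t * q) (shift^[j * q] ω) ≤ (t * q : ℕ) * L + ε * q := by
    rw [Nat.cast_mul]
    exact sub_le_iff_le_add'.1 (le_of_abs_le (hblock j hj t ht))
  have hletter (j : ℤ) : shift^[i * q] ω j = ω (j + (i * q : ℕ)) := shift_iterate_apply _ _ _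
  have hwhole := hblock i (by lia) (d + e) (by lia)
  rw [Nat.cast_add, add_mul (d : ℝ), add_mul d] at hwhole
  refine hB.exists_periodic_of_adjacent_loops (shift_iterate_mem_SFT hω (i * q)) (m := d * q)
    (n := e * q) ?_ ?_ (Nat.le_mul_of_pos_left q hd) (Nat.le_mul_of_pos_left q he) hεq
    (hgrowth i (by lia) d (by lia)) ?_ (by exact_mod_cast hwhole)
  · convert hloop₁ using 1 <;> rw [hletter] <;> push_cast <;> ring_nf
  · convert hloop₂ using 1 <;> rw [hletter] <;> push_cast <;> ring_nf
  · rw [← Function.iterate_add_apply, ← add_mul, add_comm d]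
    exact hgrowth (i + d) (by lia) e (by lia)

theorem statement13_general (ℓ : ℕ) (W : Set (ℕ × ℕ)) {B : ℕ → ℕ → Matrix (Fin 2) (Fin 2) ℝ}
    (hB : IsUnimodularOn ℓ W B) (μ : Measure (ℤ → ℕ)) [IsProbabilityMeasure μ]
    (hconc : μ (SFT ℓ W)ᶜ = 0) (herg : Ergodic shift μ) {L : ℝ}
    (hL : Tendsto (fun n : ℕ => (∫ ω, logGrowth B n ω ∂μ) / n) atTop (𝓝 L))
    {δ : ℝ} (hδ : 0 < δ) :
    ∃ p ∈ SFT ℓ W, p ∈ Function.periodicPts shift ∧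
      ∃ Lp, HasLyapunovExponent B p Lp ∧ |Lp - L| < δ := by
  have hsub : ∀ᵐ ω ∂μ, ∀ m n,
      logGrowth B (m + n) ω ≤ logGrowth B m ω + logGrowth B n (shift^[m] ω) := by
    filter_upwards [mem_ae_iff.2 hconc] with ω hω using hB.logGrowth_add_le hω
  have hL₁ : Tendsto (fun n : ℕ => ∫ ω, |logGrowth B n ω / n - L| ∂μ) atTop (𝓝 0) :=
    tendsto_integral_abs_div_sub_of_subadditive herg (hB.memLp_logGrowth hconc 2) hsub hL
  have hblocks := eventually_exists_mem_forall_abs_sub_mul_le herg.toMeasurePreserving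
    (fun n => (hB.memLp_logGrowth hconc 1 n).integrable le_rfl) logGrowth_zero hL₁ hconc (2 * ℓ)
    (by positivity : 0 < δ / 10)
  have hlarge : ∀ᶠ q : ℕ in atTop, 1 ≤ δ / 10 * q :=
    (tendsto_natCast_atTop_atTop.const_mul_atTop (by positivity)).eventually_ge_atTop 1
  obtain ⟨q, ⟨ω, hω, hblock⟩, hq⟩ := (hblocks.and hlarge).exists
  obtain ⟨p, hp, hper, Lp, hLp, hdist⟩ := hB.exists_periodic_of_blocks hω hq hblock
  exact ⟨p, hp, hper, Lp, hLp, hdist.trans_lt (by linarith)⟩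

end PeriodicApproximation

section TransferMatrix

/-- The value of `A^{(k)}(ω)` at a point with `ω (-1) = a` and `ω 0 = b`. -/
noncomputable def transferMatrix (k : ℝ) (a b : ℕ) : Matrix (Fin 2) (Fin 2) ℝ :=
  Real.sqrt (b / a) • !![(b + a) / b * Real.cos k, -(a / b); 1, 0]

theorem AIter_eq_cocycleProd (k : ℝ) (ω : ℤ → ℕ) (n : ℕ) :
    AIter k ω n = cocycleProd (transferMatrix k) ω n := by
  induction n with
  | zero => rfl
  | succ n ih =>
    rw [AIter, cocycleProd, ih, Acoc, transferMatrix, shift_iterate_apply, shift_iterate_apply,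
      zero_add, neg_add_eq_sub]

theorem det_transferMatrix (k : ℝ) {a b : ℕ} (ha : a ≠ 0) (hb : b ≠ 0) :
    (transferMatrix k a b).det = 1 := by
  rw [transferMatrix, det_smul, det_fin_two_of, Fintype.card_fin, Real.sq_sqrt (by positivity)]
  field_simp
  ring

theorem isUnimodularOn_transferMatrix (ℓ : ℕ) (W : Set (ℕ × ℕ)) (k : ℝ) :
    IsUnimodularOn ℓ W (transferMatrix k) := fun _ hω =>
  det_transferMatrix k (Nat.one_le_iff_ne_zero.1 (hω.1 _).1) (Nat.one_le_iff_ne_zero.1 (hω.1 _).1)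

end TransferMatrix

/-- (Kalinin's periodic-approximation theorem for the cocycle `A^{(k)}`.)  Fix
`k ∈ ℝ` and let `μ` be a shift-ergodic Borel probability measure on `Ω` with full
support.  Then for every `δ > 0` there is a periodic point `p ∈ Ω` such that
`|L(A^{(k)}, p) − L(A^{(k)}, μ)| < δ`, where
`L(A^{(k)}, p) = lim_{n→∞} (1/n)·log‖A_n(p)‖`. -/
theorem statement13 (ℓ : ℕ) (hℓ : 1 < ℓ) (W : Set (ℕ × ℕ)) (k : ℝ)
    (μ : Measure (ℤ → ℕ)) [IsProbabilityMeasure μ]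
    (hconc : μ (SFT ℓ W)ᶜ = 0)
    (herg : Ergodic shift μ)
    (hsupp : FullSupport ℓ W μ)
    (L : ℝ)
    (hL : Tendsto (fun n : ℕ => (1 / (n : ℝ)) * ∫ ω, Real.log ‖AIter k ω n‖ ∂μ)
      atTop (𝓝 L))
    (δ : ℝ) (hδ : 0 < δ) :
    ∃ p ∈ SFT ℓ W, (∃ n : ℕ, 1 ≤ n ∧ shift^[n] p = p) ∧
      ∃ Lp : ℝ,
        Tendsto (fun n : ℕ => (1 / (n : ℝ)) * Real.log ‖AIter k p n‖)
          atTop (𝓝 Lp) ∧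
        |Lp - L| < δ := by
  simp only [AIter_eq_cocycleProd, one_div_mul_eq_div] at hL ⊢
  exact statement13_general ℓ W (isUnimodularOn_transferMatrix ℓ W k) μ hconc herg hL hδ
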